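/- Rényi-divergence difference bounded by trace distance: Let ρ₀, ρ₁, σ be states on ℂ^d such that the support of ρ₁ is contained in the support of σ, let α ∈ (0,1) and set β := 2 − α. Then D_β(ρ₀‖σ) − D_α(ρ₁‖σ) ≥ (2/(1−α)) log(1 − ½‖ρ₀ − ρ₁‖₁) ≥ (2/(1−α)) log(1 − P(ρ₀,ρ₁)) in the extended reals. -/

import Mathlib

open scoped Kronecker ComplexOrder

noncomputable section

namespace QCD

attribute [local instance] Classical.propDecidable

variable {n m : Type} [Fintype n] [DecidableEq n] [Fintype m] [DecidableEq m]

/-- The real part of the trace of a complex matrix. -/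
def rtr (A : Matrix n n ℂ) : ℝ := (A.trace).re

/-- A quantum state: positive semidefinite with trace one. -/
def IsState (ρ : Matrix n n ℂ) : Prop := ρ.PosSemidef ∧ ρ.trace = 1

/-- Loewner order: `A ≤ B` iff `B - A` is positive semidefinite. -/
def loewnerLE (A B : Matrix n n ℂ) : Prop := (B - A).PosSemidef

/-- Support containment (for PSD matrices): `ker σ ⊆ ker ρ`. -/
def SuppLE (ρ σ : Matrix n n ℂ) : Prop := ∀ v : n → ℂ, σ.mulVec v = 0 → ρ.mulVec v = 0

/-- Functional calculus for Hermitian matrices (junk value `0` otherwise). -/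
def matFun (f : ℝ → ℝ) (A : Matrix n n ℂ) : Matrix n n ℂ :=
  if hA : A.IsHermitian then
    (hA.eigenvectorUnitary : Matrix n n ℂ) *
      Matrix.diagonal (fun i => (f (hA.eigenvalues i) : ℂ)) *
      (star (hA.eigenvectorUnitary : Matrix n n ℂ))
  else 0

/-- Matrix square root via functional calculus. -/
def msqrt (A : Matrix n n ℂ) : Matrix n n ℂ := matFun Real.sqrt A

/-- Matrix real power taken on the support (`0 ^ t := 0`). -/
def mpow (A : Matrix n n ℂ) (t : ℝ) : Matrix n n ℂ :=
  matFun (fun x => if x = 0 then 0 else x ^ t) A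

/-- Matrix base-2 logarithm on the support. -/
def mlog (A : Matrix n n ℂ) : Matrix n n ℂ := matFun (Real.logb 2) A

/-- Positive part of a Hermitian matrix. -/
def mposPart (A : Matrix n n ℂ) : Matrix n n ℂ := matFun (fun x => max x 0) A

/-- Trace norm. -/
def traceNorm (A : Matrix n m ℂ) : ℝ := rtr (msqrt (A.conjTranspose * A))

/-- Base-2 logarithm as an extended real (`⊥` on nonpositive input). -/
def elog (x : ℝ) : EReal := if x ≤ 0 then ⊥ else ((Real.logb 2 x : ℝ) : EReal)

/-- Base-2 logarithm of an extended real. -/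
def elogE (x : EReal) : EReal := if x = ⊤ then ⊤ else elog x.toReal

/-- `2 ^ x` for an extended real `x`. -/
def epow2 (x : EReal) : EReal :=
  if x = ⊤ then ⊤ else if x = ⊥ then 0 else ((((2:ℝ) ^ x.toReal : ℝ)) : EReal)

/-- Umegaki relative entropy (base 2), `⊤` if the support condition fails. -/
def relEntropy (ρ σ : Matrix n n ℂ) : EReal :=
  if SuppLE ρ σ then ((rtr (ρ * (mlog ρ - mlog σ)) : ℝ) : EReal) else ⊤

/-- Petz–Rényi divergence (base 2). -/
def petzRenyi (α : ℝ) (ρ σ : Matrix n n ℂ) : EReal :=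
  if 1 < α ∧ ¬ SuppLE ρ σ then ⊤
  else (((α - 1)⁻¹ : ℝ) : EReal) * elog (rtr (mpow ρ α * mpow σ (1 - α)))

/-- Geometric (maximal) Rényi divergence (base 2). -/
def geomRenyi (α : ℝ) (ρ σ : Matrix n n ℂ) : EReal :=
  if SuppLE ρ σ then
    (((α - 1)⁻¹ : ℝ) : EReal) *
      elog (rtr (σ * mpow (mpow σ (-(1/2 : ℝ)) * ρ * mpow σ (-(1/2 : ℝ))) α))
  else ⊤

/-- Max-relative entropy (base 2). -/
def dMax (ρ σ : Matrix n n ℂ) : EReal :=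
  sInf {x : EReal | ∃ lam : ℝ, x = (lam : EReal) ∧ loewnerLE ρ ((((2:ℝ) ^ lam : ℝ) : ℂ) • σ)}

/-- Uhlmann fidelity. -/
def fidelity (ρ σ : Matrix n n ℂ) : ℝ := (rtr (msqrt (msqrt σ * ρ * msqrt σ))) ^ 2

/-- Sine (purified) distance. -/
def sineDist (ρ σ : Matrix n n ℂ) : ℝ := Real.sqrt (1 - fidelity ρ σ)

/-- Smoothed max-relative entropy: smoothing over states in the sine-distance ball. -/
def dMaxSmooth (δ : ℝ) (ρ σ : Matrix n n ℂ) : EReal :=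
  ⨅ (ρ' : Matrix n n ℂ) (_ : IsState ρ' ∧ sineDist ρ ρ' ≤ δ), dMax ρ' σ

/-- Hypothesis testing divergence (base 2). -/
def dH (ε : ℝ) (ρ σ : Matrix n n ℂ) : EReal :=
  - elog (sInf {x : ℝ | ∃ T : Matrix n n ℂ,
      T.PosSemidef ∧ ((1 : Matrix n n ℂ) - T).PosSemidef ∧ 1 - ε ≤ rtr (T * ρ) ∧ x = rtr (T * σ)})

/-- The quantity `c_γ(ρ‖σ)`. -/
def cGamma (γ : ℝ) (ρ σ : Matrix n n ℂ) : EReal :=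
  ((γ⁻¹ : ℝ) : EReal) *
    elogE (epow2 ((γ : ℝ) * petzRenyi (1 + γ) ρ σ) +
           epow2 (((-γ : ℝ) : EReal) * petzRenyi (1 - γ) ρ σ) + 1)

/-- Binary entropy (base 2). -/
def binEnt (x : ℝ) : ℝ := -(x * Real.logb 2 x) - (1 - x) * Real.logb 2 (1 - x)

/-- Action of `id_k ⊗ Φ` on block matrices. -/
def blockApply {k : Type} (Φ : Matrix n n ℂ →ₗ[ℂ] Matrix m m ℂ)
    (M : Matrix (k × n) (k × n) ℂ) : Matrix (k × m) (k × m) ℂ :=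
  Matrix.of fun p q => Φ (Matrix.of fun a b => M (p.1, a) (q.1, b)) p.2 q.2

/-- Action of `Φ ⊗ id_k` on block matrices. -/
def blockApplyRight {k : Type} (Φ : Matrix n n ℂ →ₗ[ℂ] Matrix m m ℂ)
    (M : Matrix (n × k) (n × k) ℂ) : Matrix (m × k) (m × k) ℂ :=
  Matrix.of fun p q => Φ (Matrix.of fun a b => M (a, p.2) (b, q.2)) p.1 q.1

/-- Quantum channel: trace preserving and completely positive. -/
def IsQChannel (Φ : Matrix n n ℂ →ₗ[ℂ] Matrix m m ℂ) : Prop :=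
  (∀ M : Matrix n n ℂ, (Φ M).trace = M.trace) ∧
  (∀ k : ℕ, 1 ≤ k → ∀ M : Matrix (Fin k × n) (Fin k × n) ℂ, M.PosSemidef →
    (blockApply Φ M).PosSemidef)

/-- `id_k ⊗ Φ` as a linear map. -/
def blockApplyL (k : Type) (Φ : Matrix n n ℂ →ₗ[ℂ] Matrix m m ℂ) :
    Matrix (k × n) (k × n) ℂ →ₗ[ℂ] Matrix (k × m) (k × m) ℂ where
  toFun := blockApply Φ
  map_add' M N := by
    ext p q
    show Φ (Matrix.of fun a b => (M + N) (p.1, a) (q.1, b)) p.2 q.2 = _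
    have h : (Matrix.of fun a b => (M + N) (p.1, a) (q.1, b)) =
        (Matrix.of fun a b => M (p.1, a) (q.1, b)) +
          (Matrix.of fun a b => N (p.1, a) (q.1, b)) := rfl
    rw [h, map_add]
    rfl
  map_smul' c M := by
    ext p q
    show Φ (Matrix.of fun a b => (c • M) (p.1, a) (q.1, b)) p.2 q.2 = _
    have h : (Matrix.of fun a b => (c • M) (p.1, a) (q.1, b)) =
        c • (Matrix.of fun a b => M (p.1, a) (q.1, b)) := rfl
    rw [h, map_smul]
    rfl

/-- `Φ ⊗ id_k` as a linear map. -/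
def blockApplyRightL (k : Type) (Φ : Matrix n n ℂ →ₗ[ℂ] Matrix m m ℂ) :
    Matrix (n × k) (n × k) ℂ →ₗ[ℂ] Matrix (m × k) (m × k) ℂ where
  toFun := blockApplyRight Φ
  map_add' M N := by
    ext p q
    show Φ (Matrix.of fun a b => (M + N) (a, p.2) (b, q.2)) p.1 q.1 = _
    have h : (Matrix.of fun a b => (M + N) (a, p.2) (b, q.2)) =
        (Matrix.of fun a b => M (a, p.2) (b, q.2)) +
          (Matrix.of fun a b => N (a, p.2) (b, q.2)) := rfl
    rw [h, map_add]
    rfl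
  map_smul' c M := by
    ext p q
    show Φ (Matrix.of fun a b => (c • M) (a, p.2) (b, q.2)) p.1 q.1 = _
    have h : (Matrix.of fun a b => (c • M) (a, p.2) (b, q.2)) =
        c • (Matrix.of fun a b => M (a, p.2) (b, q.2)) := rfl
    rw [h, map_smul]
    rfl

/-- Tensor product of two channels (Kronecker product action). -/
def tensorChannel {n₁ m₁ n₂ m₂ : Type}
    (E₁ : Matrix n₁ n₁ ℂ →ₗ[ℂ] Matrix m₁ m₁ ℂ) (E₂ : Matrix n₂ n₂ ℂ →ₗ[ℂ] Matrix m₂ m₂ ℂ) :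
    Matrix (n₁ × n₂) (n₁ × n₂) ℂ →ₗ[ℂ] Matrix (m₁ × m₂) (m₁ × m₂) ℂ :=
  (blockApplyRightL m₂ E₁).comp (blockApplyL n₁ E₂)

/-- Index type for `k`-fold tensor powers. -/
def tpow (ι : Type) : ℕ → Type
  | 0 => PUnit
  | (k+1) => tpow ι k × ι

def tpowFintype (ι : Type) [Fintype ι] : ∀ k : ℕ, Fintype (tpow ι k)
  | 0 => inferInstanceAs (Fintype PUnit)
  | (k+1) => letI := tpowFintype ι k; inferInstanceAs (Fintype (tpow ι k × ι))

instance (ι : Type) [Fintype ι] (k : ℕ) : Fintype (tpow ι k) := tpowFintype ι k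

def tpowDecEq (ι : Type) [DecidableEq ι] : ∀ k : ℕ, DecidableEq (tpow ι k)
  | 0 => inferInstanceAs (DecidableEq PUnit)
  | (k+1) => letI := tpowDecEq ι k; inferInstanceAs (DecidableEq (tpow ι k × ι))

instance (ι : Type) [DecidableEq ι] (k : ℕ) : DecidableEq (tpow ι k) := tpowDecEq ι k

/-- `k`-fold Kronecker tensor power of a matrix. -/
def tpowMat (ρ : Matrix n n ℂ) : ∀ k : ℕ, Matrix (tpow n k) (tpow n k) ℂ
  | 0 => 1
  | (k+1) => (tpowMat ρ k) ⊗ₖ ρ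

/-- `k`-fold tensor power of a channel. -/
def tpowChannel (Φ : Matrix n n ℂ →ₗ[ℂ] Matrix m m ℂ) :
    ∀ k : ℕ, Matrix (tpow n k) (tpow n k) ℂ →ₗ[ℂ] Matrix (tpow m k) (tpow m k) ℂ
  | 0 => LinearMap.id
  | (k+1) => tensorChannel (tpowChannel Φ k) Φ

/-- Channel divergence induced by a divergence `𝔇` on states:
sup over `k ≥ 1` and input states `ν` on `ℂ^k ⊗ ℂ^d`. -/
def chDiv (𝔇 : ∀ (p : Type) [Fintype p] [DecidableEq p], Matrix p p ℂ → Matrix p p ℂ → EReal)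
    (E F : Matrix n n ℂ →ₗ[ℂ] Matrix m m ℂ) : EReal :=
  ⨆ (k : ℕ) (_ : 1 ≤ k) (ν : Matrix (Fin k × n) (Fin k × n) ℂ) (_ : IsState ν),
    𝔇 (Fin k × m) (blockApply E ν) (blockApply F ν)

/-- The geometric Rényi divergence as a divergence family. -/
def geomD (α : ℝ) : ∀ (p : Type) [Fintype p] [DecidableEq p],
    Matrix p p ℂ → Matrix p p ℂ → EReal :=
  fun _ _ _ => geomRenyi α

/-- The Umegaki relative entropy as a divergence family. -/
def relD : ∀ (p : Type) [Fintype p] [DecidableEq p],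
    Matrix p p ℂ → Matrix p p ℂ → EReal :=
  fun _ _ _ => relEntropy

/-- The hypothesis testing divergence as a divergence family. -/
def dHD (ε : ℝ) : ∀ (p : Type) [Fintype p] [DecidableEq p],
    Matrix p p ℂ → Matrix p p ℂ → EReal :=
  fun _ _ _ => dH ε

/-- Regularized channel relative entropy. -/
def regRelEntropy (E F : Matrix n n ℂ →ₗ[ℂ] Matrix m m ℂ) : EReal :=
  ⨆ (k : ℕ) (_ : 1 ≤ k),
    (((k : ℝ)⁻¹ : ℝ) : EReal) * chDiv relD (tpowChannel E k) (tpowChannel F k)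

end QCD

/-!
Suppose `ker σ ⊆ ker ρ₀`, as otherwise `D_(2-α)(ρ₀‖σ) = ⊤`. The Cauchy–Schwarz inequality for the
Hilbert–Schmidt inner product of `σ^((α-1)/2) ρ₀^(1-α/2)` and `σ^((1-α)/2) ρ₁^(α/2)` gives
`Tr[ρ₀^(1-α/2) ρ₁^(α/2)]² ≤ Q_(2-α)(ρ₀‖σ) Q_α(ρ₁‖σ)`, where `Q_α(ρ‖σ) = Tr[ρ^α σ^(1-α)]`.
By Audenaert's inequality `(Tr A + Tr B - ‖A - B‖₁) / 2 ≤ Tr[A^(1-s) B^s]`, the left-hand side is at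
least `(1 - ½‖ρ₀ - ρ₁‖₁)²`; taking logarithms yields the first bound. Audenaert's inequality is
proved following Ozawa: `C = B + (A - B)⁺` dominates both `A` and `B`, and one replaces `A` and `B`
by `C` one power at a time, using that `x ↦ x^s` is operator monotone (Löwner–Heinz).

The second bound is the Fuchs–van de Graaf inequality. Write `ρ = X Xᴴ` and `σ = Y Yᴴ` with
`Re Tr[Xᴴ Y] = √F(ρ, σ)` (Uhlmann), and let `S` be a self-adjoint unitary sign of `ρ - σ`. Then
`‖ρ - σ‖₁ = Re Tr[(X + Y)ᴴ S (X - Y)]`, and Cauchy–Schwarz bounds the square of the right-hand side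
by `(Tr ρ + Tr σ)² - 4 F(ρ, σ)`.
-/

namespace QCD

section

open scoped MatrixOrder

variable {n m : Type} [Fintype n] [Fintype m]

lemma rtr_add (A B : Matrix n n ℂ) : rtr (A + B) = rtr A + rtr B := by
  simp [rtr]

lemma rtr_sub (A B : Matrix n n ℂ) : rtr (A - B) = rtr A - rtr B := by
  simp [rtr]

lemma rtr_smul (t : ℝ) (A : Matrix n n ℂ) : rtr (t • A) = t * rtr A := by
  simp [rtr]

lemma rtr_conjTranspose (A : Matrix n n ℂ) : rtr A.conjTranspose = rtr A := by
  simp [rtr, Matrix.trace_conjTranspose]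

lemma rtr_mul_comm (A : Matrix n m ℂ) (B : Matrix m n ℂ) : rtr (A * B) = rtr (B * A) := by
  simp only [rtr, Matrix.trace_mul_comm A B]

lemma rtr_conjTranspose_mul_comm (A B : Matrix n m ℂ) :
    rtr (A.conjTranspose * B) = rtr (B.conjTranspose * A) := by
  rw [← rtr_conjTranspose, Matrix.conjTranspose_mul, Matrix.conjTranspose_conjTranspose]

lemma IsState.rtr_eq_one {ρ : Matrix n n ℂ} (hρ : IsState ρ) : rtr ρ = 1 := by
  simp [rtr, hρ.2]

lemma rtr_nonneg {A : Matrix n n ℂ} (hA : A.PosSemidef) : 0 ≤ rtr A :=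
  (Complex.le_def.1 hA.trace_nonneg).1

lemma rtr_mul_nonneg {A B : Matrix n n ℂ} (hA : A.PosSemidef) (hB : B.PosSemidef) :
    0 ≤ rtr (A * B) := by
  classical
  obtain ⟨C, rfl⟩ := CStarAlgebra.nonneg_iff_eq_star_mul_self.mp hA.nonneg
  rw [mul_assoc, rtr_mul_comm]
  exact rtr_nonneg (hB.mul_mul_conjTranspose_same C)

lemma rtr_mul_le_rtr_mul_left {A B C : Matrix n n ℂ} (hA : A.PosSemidef) (hBC : B ≤ C) :
    rtr (A * B) ≤ rtr (A * C) := by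
  have h := rtr_mul_nonneg hA (Matrix.le_iff.mp hBC)
  rwa [mul_sub, rtr_sub, sub_nonneg] at h

lemma rtr_mul_le_rtr_mul_right {A B C : Matrix n n ℂ} (hA : A.PosSemidef) (hBC : B ≤ C) :
    rtr (B * A) ≤ rtr (C * A) := by
  simpa only [rtr_mul_comm _ A] using rtr_mul_le_rtr_mul_left hA hBC

lemma rtr_conjTranspose_mul_self_nonneg (A : Matrix n m ℂ) : 0 ≤ rtr (A.conjTranspose * A) :=
  rtr_nonneg (Matrix.posSemidef_conjTranspose_mul_self A)

lemma rtr_conjTranspose_add_mul_add (A B : Matrix n m ℂ) :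
    rtr ((A + B).conjTranspose * (A + B)) =
      rtr (A.conjTranspose * A) + rtr (B.conjTranspose * B) + 2 * rtr (A.conjTranspose * B) := by
  simp only [Matrix.conjTranspose_add, Matrix.add_mul, Matrix.mul_add, rtr_add,
    rtr_conjTranspose_mul_comm B A]
  ring

lemma rtr_conjTranspose_sub_mul_sub (A B : Matrix n m ℂ) :
    rtr ((A - B).conjTranspose * (A - B)) =
      rtr (A.conjTranspose * A) + rtr (B.conjTranspose * B) - 2 * rtr (A.conjTranspose * B) := by
  simp only [Matrix.conjTranspose_sub, Matrix.sub_mul, Matrix.mul_sub, rtr_sub,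
    rtr_conjTranspose_mul_comm B A]
  ring

lemma sq_rtr_conjTranspose_mul_le (A B : Matrix n m ℂ) :
    rtr (A.conjTranspose * B) ^ 2 ≤ rtr (A.conjTranspose * A) * rtr (B.conjTranspose * B) := by
  have quadratic_nonneg (t : ℝ) : 0 ≤ rtr (B.conjTranspose * B) * (t * t) +
      2 * rtr (A.conjTranspose * B) * t + rtr (A.conjTranspose * A) := by
    have h := rtr_conjTranspose_mul_self_nonneg (A + t • B)
    simp only [rtr_conjTranspose_add_mul_add, Matrix.conjTranspose_smul, star_trivial,
      Matrix.smul_mul, Matrix.mul_smul, rtr_smul] at h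
    linarith
  have h := discrim_le_zero quadratic_nonneg
  rw [discrim] at h
  linarith

variable [DecidableEq n]

lemma matFun_eq_cfc (f : ℝ → ℝ) (A : Matrix n n ℂ) : matFun f A = cfc f A := by
  unfold matFun
  split_ifs with hA
  · rw [hA.cfc_eq, Matrix.IsHermitian.cfc, Unitary.conjStarAlgAut_apply]
    rfl
  · exact (cfc_apply_of_not_predicate A hA).symm

lemma continuousOn_real_spectrum (f : ℝ → ℝ) (A : Matrix n n ℂ) :
    ContinuousOn f (spectrum ℝ A) :=
  A.finite_real_spectrum.continuousOn f

lemma isHermitian_mpow (A : Matrix n n ℂ) (t : ℝ) : (mpow A t).IsHermitian := by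
  rw [mpow, matFun_eq_cfc]
  exact cfc_predicate _ A

lemma posSemidef_mpow {A : Matrix n n ℂ} (hA : A.PosSemidef) (t : ℝ) :
    (mpow A t).PosSemidef := by
  rw [← Matrix.nonneg_iff_posSemidef, mpow, matFun_eq_cfc]
  refine cfc_nonneg fun x hx => ?_
  have : 0 ≤ x := spectrum_nonneg_of_nonneg hA.nonneg hx
  positivity

lemma mpow_mul_mpow {A : Matrix n n ℂ} (hA : A.PosSemidef) (s t : ℝ) :
    mpow A s * mpow A t = mpow A (s + t) := by
  simp only [mpow, matFun_eq_cfc]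
  rw [← cfc_mul _ _ A (continuousOn_real_spectrum _ A) (continuousOn_real_spectrum _ A)]
  refine cfc_congr fun x hx => ?_
  have hx : 0 ≤ x := spectrum_nonneg_of_nonneg hA.nonneg hx
  split_ifs with hx₀
  · exact zero_mul 0
  · exact (Real.rpow_add (hx.lt_of_ne' hx₀) s t).symm

lemma mpow_one {A : Matrix n n ℂ} (hA : A.IsHermitian) : mpow A 1 = A := by
  rw [mpow, matFun_eq_cfc]
  conv_rhs => rw [← cfc_id' ℝ A hA]
  congr with x
  simp +contextual

lemma mpow_eq_rpow {A : Matrix n n ℂ} (hA : A.PosSemidef) {t : ℝ} (ht : t ≠ 0) :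
    mpow A t = A ^ t := by
  rw [CFC.rpow_eq_cfc_real hA.nonneg, mpow, matFun_eq_cfc]
  congr with x
  split_ifs with hx
  · rw [hx, Real.zero_rpow ht]
  · rfl

lemma msqrt_eq_mpow (A : Matrix n n ℂ) : msqrt A = mpow A (1 / 2) := by
  rw [msqrt, mpow]
  congr with x
  rw [Real.sqrt_eq_rpow]
  split_ifs with hx
  · simp [hx]
  · rfl

lemma isHermitian_msqrt (A : Matrix n n ℂ) : (msqrt A).IsHermitian := by
  rw [msqrt_eq_mpow]
  exact isHermitian_mpow A _

lemma msqrt_mul_msqrt {A : Matrix n n ℂ} (hA : A.PosSemidef) : msqrt A * msqrt A = A := by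
  rw [msqrt_eq_mpow, mpow_mul_mpow hA, add_halves, mpow_one hA.1]

lemma mpow_one_sub_mul_mpow {A : Matrix n n ℂ} (hA : A.PosSemidef) (s : ℝ) :
    mpow A (1 - s) * mpow A s = A := by
  rw [mpow_mul_mpow hA, sub_add_cancel, mpow_one hA.1]

open scoped Matrix.Norms.L2Operator in
lemma mpow_le_mpow {A B : Matrix n n ℂ} (hA : A.PosSemidef) (hAB : A ≤ B) {t : ℝ}
    (ht₀ : 0 < t) (ht₁ : t ≤ 1) : mpow A t ≤ mpow B t := by
  have hB : B.PosSemidef := Matrix.nonneg_iff_posSemidef.mp (hA.nonneg.trans hAB)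
  rw [mpow_eq_rpow hA ht₀.ne', mpow_eq_rpow hB ht₀.ne']
  exact CFC.rpow_le_rpow ⟨ht₀.le, ht₁⟩ hAB

lemma mul_mpow_zero_of_suppLE {ρ σ : Matrix n n ℂ} (hσ : σ.PosSemidef) (h : SuppLE ρ σ) :
    ρ * mpow σ 0 = ρ := by
  have hσ_ker : σ * (1 - mpow σ 0) = 0 := by
    have h_one := mpow_mul_mpow hσ 1 0
    rw [add_zero, mpow_one hσ.1] at h_one
    rw [mul_sub, mul_one, h_one, sub_self]
  have hρ_ker : ρ * (1 - mpow σ 0) = 0 := by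
    ext i j
    exact congrFun (h (fun k => (1 - mpow σ 0) k j) (funext fun i => congrFun₂ hσ_ker i j)) i
  rwa [mul_sub, mul_one, sub_eq_zero, eq_comm] at hρ_ker

lemma mpow_mul_mpow_zero_of_suppLE {ρ σ : Matrix n n ℂ} (hρ : ρ.PosSemidef)
    (hσ : σ.PosSemidef) (h : SuppLE ρ σ) (t : ℝ) : mpow ρ t * mpow σ 0 = mpow ρ t := by
  have factor : mpow ρ t = mpow ρ (t - 1) * ρ := by
    nth_rw 3 [← mpow_one hρ.1]
    rw [mpow_mul_mpow hρ, sub_add_cancel]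
  rw [factor, mul_assoc, mul_mpow_zero_of_suppLE hσ h]

lemma traceNorm_eq_rtr_abs (A : Matrix n n ℂ) : traceNorm A = rtr (CFC.abs A) := by
  rw [traceNorm, msqrt_eq_mpow,
    mpow_eq_rpow (Matrix.posSemidef_conjTranspose_mul_self A) (by norm_num), ← CFC.sqrt_eq_rpow]
  rfl

lemma traceNorm_zero : traceNorm (0 : Matrix n n ℂ) = 0 := by
  rw [traceNorm_eq_rtr_abs, CFC.abs_zero, rtr, Matrix.trace_zero, Complex.zero_re]

lemma rtr_posPart {A : Matrix n n ℂ} (hA : A.IsHermitian) :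
    rtr A⁺ = (traceNorm A + rtr A) / 2 := by
  have h := congrArg rtr (CFC.abs_add_self A hA)
  rw [rtr_add, ← traceNorm_eq_rtr_abs, two_nsmul, rtr_add] at h
  linarith

lemma exists_isHermitian_mul_self_eq_one_rtr_mul_eq_traceNorm {A : Matrix n n ℂ}
    (hA : A.IsHermitian) :
    ∃ S : Matrix n n ℂ, S.IsHermitian ∧ S * S = 1 ∧ rtr (S * A) = traceNorm A := by
  have hA' : IsSelfAdjoint A := hA
  let sgn : ℝ → ℝ := fun x => if 0 ≤ x then 1 else -1
  have hsgn := continuousOn_real_spectrum sgn A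
  refine ⟨cfc sgn A, cfc_predicate sgn A, ?_, ?_⟩
  · rw [← cfc_mul sgn sgn A hsgn hsgn, ← cfc_const_one ℝ A hA']
    congr with x
    grind
  · rw [traceNorm_eq_rtr_abs, CFC.abs_eq_cfc_norm A hA']
    nth_rw 2 [← cfc_id' ℝ A hA']
    rw [← cfc_mul sgn _ A hsgn (continuousOn_real_spectrum _ A)]
    congr with x
    grind [Real.norm_eq_abs]

lemma rtr_add_rtr_le_of_le {A B C : Matrix n n ℂ} (hA : A.PosSemidef) (hB : B.PosSemidef)
    (hAC : A ≤ C) (hBC : B ≤ C) {s : ℝ} (hs₀ : 0 < s) (hs₁ : s < 1) :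
    rtr A + rtr B ≤ rtr (mpow A (1 - s) * mpow B s) + rtr C := by
  have hC : C.PosSemidef := Matrix.nonneg_iff_posSemidef.mp (hA.nonneg.trans hAC)
  have hBC_s : mpow B s ≤ mpow C s := mpow_le_mpow hB hBC hs₀ hs₁.le
  have h₀ : 0 < 1 - s := sub_pos.mpr hs₁
  have h₁ : 1 - s ≤ 1 := sub_le_self 1 hs₀.le
  have key : rtr A - rtr (mpow A (1 - s) * mpow B s) ≤ rtr C - rtr B := calc
    rtr A - rtr (mpow A (1 - s) * mpow B s)
      = rtr (mpow A (1 - s) * mpow A s) - rtr (mpow A (1 - s) * mpow B s) := by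
        rw [mpow_one_sub_mul_mpow hA]
    _ ≤ rtr (mpow A (1 - s) * mpow C s) - rtr (mpow A (1 - s) * mpow B s) := by
        gcongr
        exact rtr_mul_le_rtr_mul_left (posSemidef_mpow hA _) (mpow_le_mpow hA hAC hs₀ hs₁.le)
    _ = rtr (mpow A (1 - s) * (mpow C s - mpow B s)) := by rw [mul_sub, rtr_sub]
    _ ≤ rtr (mpow C (1 - s) * (mpow C s - mpow B s)) :=
        rtr_mul_le_rtr_mul_right (Matrix.le_iff.mp hBC_s) (mpow_le_mpow hA hAC h₀ h₁)
    _ = rtr C - rtr (mpow C (1 - s) * mpow B s) := by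
        rw [mul_sub, rtr_sub, mpow_one_sub_mul_mpow hC]
    _ ≤ rtr C - rtr (mpow B (1 - s) * mpow B s) := by
        gcongr
        exact rtr_mul_le_rtr_mul_right (posSemidef_mpow hB s) (mpow_le_mpow hB hBC h₀ h₁)
    _ = rtr C - rtr B := by rw [mpow_one_sub_mul_mpow hB]
  linarith

lemma half_rtr_add_rtr_sub_traceNorm_le {A B : Matrix n n ℂ} (hA : A.PosSemidef)
    (hB : B.PosSemidef) {s : ℝ} (hs₀ : 0 < s) (hs₁ : s < 1) :
    (rtr A + rtr B - traceNorm (A - B)) / 2 ≤ rtr (mpow A (1 - s) * mpow B s) := by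
  have hAB : (A - B).IsHermitian := hA.1.sub hB.1
  have hBC : B ≤ B + (A - B)⁺ := le_add_of_nonneg_right (CFC.posPart_nonneg _)
  have hAC : A ≤ B + (A - B)⁺ := sub_le_iff_le_add'.mp (CFC.le_posPart hAB)
  have h := rtr_add_rtr_le_of_le hA hB hAC hBC hs₀ hs₁
  rw [rtr_add, rtr_posPart hAB, rtr_sub] at h
  linarith

lemma sq_traceNorm_mul_conjTranspose_sub_le (X Y : Matrix n m ℂ) :
    traceNorm (X * X.conjTranspose - Y * Y.conjTranspose) ^ 2 ≤
      (rtr (X * X.conjTranspose) + rtr (Y * Y.conjTranspose)) ^ 2 -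
        4 * rtr (X.conjTranspose * Y) ^ 2 := by
  obtain ⟨S, hS, hSS, hS_rtr⟩ := exists_isHermitian_mul_self_eq_one_rtr_mul_eq_traceNorm
    ((Matrix.isHermitian_mul_conjTranspose_self X).sub
      (Matrix.isHermitian_mul_conjTranspose_self Y))
  have polarization : rtr (S * (X * X.conjTranspose - Y * Y.conjTranspose)) =
      rtr ((X + Y).conjTranspose * (S * (X - Y))) := by
    have cross : rtr (Y.conjTranspose * (S * X)) = rtr (X.conjTranspose * (S * Y)) := by
      rw [rtr_conjTranspose_mul_comm, Matrix.conjTranspose_mul, hS.eq, Matrix.mul_assoc]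
    simp only [Matrix.conjTranspose_add, Matrix.add_mul, Matrix.mul_sub, rtr_add, rtr_sub, cross,
      ← Matrix.mul_assoc S, rtr_mul_comm _ X.conjTranspose, rtr_mul_comm _ Y.conjTranspose]
    ring
  have isometry : (S * (X - Y)).conjTranspose * (S * (X - Y)) =
      (X - Y).conjTranspose * (X - Y) := by
    rw [Matrix.conjTranspose_mul, hS.eq, Matrix.mul_assoc, ← Matrix.mul_assoc S, hSS,
      Matrix.one_mul]
  have h := sq_rtr_conjTranspose_mul_le (X + Y) (S * (X - Y))
  rw [isometry, ← polarization, hS_rtr, rtr_conjTranspose_add_mul_add,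
    rtr_conjTranspose_sub_mul_sub] at h
  rw [rtr_mul_comm X, rtr_mul_comm Y]
  linarith

/-- The extra columns complete the polar partial isometry of `M` to a coisometry. -/
lemma exists_coisometry_mul_conjTranspose_eq_msqrt (M : Matrix n m ℂ) :
    ∃ W : Matrix n (m ⊕ n) ℂ, W * W.conjTranspose = 1 ∧
      W * (Matrix.fromCols M (0 : Matrix n n ℂ)).conjTranspose = msqrt (M * M.conjTranspose) := by
  set G := M * M.conjTranspose with hG_def
  have hG : G.PosSemidef := Matrix.posSemidef_self_mul_conjTranspose M
  set N := mpow G (-(1 / 2))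
  have hN : N.conjTranspose = N := isHermitian_mpow G _
  have hNG : N * G = msqrt G := calc
    N * G = N * mpow G 1 := by rw [mpow_one hG.1]
    _ = msqrt G := by
      rw [mpow_mul_mpow hG, msqrt_eq_mpow]
      norm_num
  have hNGN : N * G * N = mpow G 0 := by
    rw [hNG, msqrt_eq_mpow, mpow_mul_mpow hG, add_neg_cancel]
  have hQ : (mpow G 0).conjTranspose = mpow G 0 := isHermitian_mpow G 0
  have hQQ : IsIdempotentElem (mpow G 0) := by
    rw [IsIdempotentElem, mpow_mul_mpow hG, add_zero]
  refine ⟨Matrix.fromCols (N * M) (1 - mpow G 0), ?_, ?_⟩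
  · rw [Matrix.conjTranspose_fromCols_eq_fromRows_conjTranspose, Matrix.fromCols_mul_fromRows,
      Matrix.conjTranspose_mul, hN, Matrix.mul_assoc, ← Matrix.mul_assoc M, ← hG_def,
      ← Matrix.mul_assoc, hNGN, Matrix.conjTranspose_sub, Matrix.conjTranspose_one, hQ,
      hQQ.one_sub.eq, add_sub_cancel]
  · rw [Matrix.conjTranspose_fromCols_eq_fromRows_conjTranspose, Matrix.fromCols_mul_fromRows,
      Matrix.mul_assoc, ← hG_def, hNG, Matrix.conjTranspose_zero, Matrix.mul_zero, add_zero]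

/-- A purification of `ρ` in `ℂ^n ⊗ ℂ^(n ⊕ n)` is encoded as a matrix `X` with `X * Xᴴ = ρ`, and
the overlap of two purifications is `Tr[Xᴴ * Y]`. -/
lemma exists_purifications_fidelity_eq {ρ σ : Matrix n n ℂ} (hρ : ρ.PosSemidef)
    (hσ : σ.PosSemidef) :
    ∃ X Y : Matrix n (n ⊕ n) ℂ, X * X.conjTranspose = ρ ∧ Y * Y.conjTranspose = σ ∧
      fidelity ρ σ = rtr (X.conjTranspose * Y) ^ 2 := by
  have hsqrt_ρ : (msqrt ρ).conjTranspose = msqrt ρ := isHermitian_msqrt ρ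
  have hsqrt_σ : (msqrt σ).conjTranspose = msqrt σ := isHermitian_msqrt σ
  obtain ⟨W, hWW, hW⟩ := exists_coisometry_mul_conjTranspose_eq_msqrt (msqrt σ * msqrt ρ)
  refine ⟨Matrix.fromCols (msqrt ρ) 0, msqrt σ * W, ?_, ?_, ?_⟩
  · rw [Matrix.conjTranspose_fromCols_eq_fromRows_conjTranspose, Matrix.fromCols_mul_fromRows,
      hsqrt_ρ, msqrt_mul_msqrt hρ, Matrix.zero_mul, add_zero]
  · rw [Matrix.conjTranspose_mul, hsqrt_σ, Matrix.mul_assoc, ← Matrix.mul_assoc W, hWW,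
      Matrix.one_mul, msqrt_mul_msqrt hσ]
  · have hG : msqrt σ * msqrt ρ * (msqrt σ * msqrt ρ).conjTranspose =
        msqrt σ * ρ * msqrt σ := by
      rw [Matrix.conjTranspose_mul, hsqrt_σ, hsqrt_ρ, mul_assoc, ← mul_assoc (msqrt ρ),
        msqrt_mul_msqrt hρ, mul_assoc]
    have hcols : Matrix.fromCols (msqrt σ * msqrt ρ) (0 : Matrix n n ℂ) =
        msqrt σ * Matrix.fromCols (msqrt ρ) (0 : Matrix n n ℂ) := by
      rw [Matrix.mul_fromCols, Matrix.mul_zero]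
    rw [fidelity, ← hG, ← hW, hcols, Matrix.conjTranspose_mul, hsqrt_σ, ← Matrix.mul_assoc,
      rtr_mul_comm _ (msqrt σ), ← Matrix.mul_assoc, rtr_mul_comm]

lemma sq_traceNorm_sub_le {ρ σ : Matrix n n ℂ} (hρ : ρ.PosSemidef) (hσ : σ.PosSemidef) :
    traceNorm (ρ - σ) ^ 2 ≤ (rtr ρ + rtr σ) ^ 2 - 4 * fidelity ρ σ := by
  obtain ⟨X, Y, rfl, rfl, hF⟩ := exists_purifications_fidelity_eq hρ hσ
  rw [hF]
  exact sq_traceNorm_mul_conjTranspose_sub_le X Y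

lemma IsState.half_traceNorm_sub_le_sineDist {ρ σ : Matrix n n ℂ} (hρ : IsState ρ)
    (hσ : IsState σ) : traceNorm (ρ - σ) / 2 ≤ sineDist ρ σ := by
  have h := sq_traceNorm_sub_le hρ.1 hσ.1
  rw [hρ.rtr_eq_one, hσ.rtr_eq_one] at h
  refine Real.le_sqrt_of_sq_le ?_
  linarith

lemma IsState.half_traceNorm_sub_le_one {ρ σ : Matrix n n ℂ} (hρ : IsState ρ)
    (hσ : IsState σ) : traceNorm (ρ - σ) / 2 ≤ 1 :=
  (hρ.half_traceNorm_sub_le_sineDist hσ).trans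
    (Real.sqrt_le_one.mpr (sub_le_self 1 (sq_nonneg _)))

/-- The Petz quasi-divergence `Q_α(ρ‖σ) = Tr[ρ^α σ^(1-α)]`, whose logarithm divided by `α - 1` is
the Petz–Rényi divergence; powers are taken on the supports, as in `mpow`. -/
def petzQuasi (α : ℝ) (ρ σ : Matrix n n ℂ) : ℝ := rtr (mpow ρ α * mpow σ (1 - α))

lemma petzQuasi_nonneg {ρ σ : Matrix n n ℂ} (hρ : ρ.PosSemidef) (hσ : σ.PosSemidef) (α : ℝ) :
    0 ≤ petzQuasi α ρ σ :=
  rtr_mul_nonneg (posSemidef_mpow hρ α) (posSemidef_mpow hσ (1 - α))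

lemma rtr_conjTranspose_mpow_mul_mpow {ρ σ : Matrix n n ℂ} (hρ : ρ.PosSemidef)
    (hσ : σ.PosSemidef) (a b : ℝ) :
    rtr ((mpow σ b * mpow ρ a).conjTranspose * (mpow σ b * mpow ρ a)) =
      rtr (mpow ρ (a + a) * mpow σ (b + b)) := by
  rw [Matrix.conjTranspose_mul, (isHermitian_mpow ρ a).eq, (isHermitian_mpow σ b).eq, mul_assoc,
    ← mul_assoc (mpow σ b), mpow_mul_mpow hσ, rtr_mul_comm, mul_assoc, mpow_mul_mpow hρ,
    rtr_mul_comm]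

lemma sq_rtr_mpow_mul_mpow_le_petzQuasi_mul_petzQuasi {ρ₀ ρ₁ σ : Matrix n n ℂ}
    (hρ₀ : ρ₀.PosSemidef) (hρ₁ : ρ₁.PosSemidef) (hσ : σ.PosSemidef) (h : SuppLE ρ₀ σ) (α : ℝ) :
    rtr (mpow ρ₀ (1 - α / 2) * mpow ρ₁ (α / 2)) ^ 2 ≤
      petzQuasi (2 - α) ρ₀ σ * petzQuasi α ρ₁ σ := by
  have inner_eq : (mpow σ ((α - 1) / 2) * mpow ρ₀ (1 - α / 2)).conjTranspose *
      (mpow σ ((1 - α) / 2) * mpow ρ₁ (α / 2)) = mpow ρ₀ (1 - α / 2) * mpow ρ₁ (α / 2) := by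
    rw [Matrix.conjTranspose_mul, (isHermitian_mpow ρ₀ _).eq, (isHermitian_mpow σ _).eq, mul_assoc,
      ← mul_assoc (mpow σ _), mpow_mul_mpow hσ, ← add_div, sub_add_sub_cancel, sub_self, zero_div,
      ← mul_assoc, mpow_mul_mpow_zero_of_suppLE hρ₀ hσ h]
  have cauchy_schwarz := sq_rtr_conjTranspose_mul_le
    (mpow σ ((α - 1) / 2) * mpow ρ₀ (1 - α / 2)) (mpow σ ((1 - α) / 2) * mpow ρ₁ (α / 2))
  rw [inner_eq, rtr_conjTranspose_mpow_mul_mpow hρ₀ hσ,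
    rtr_conjTranspose_mpow_mul_mpow hρ₁ hσ] at cauchy_schwarz
  simp only [petzQuasi]
  convert cauchy_schwarz using 5 <;> ring

lemma sq_one_sub_half_traceNorm_le_petzQuasi_mul_petzQuasi {ρ₀ ρ₁ σ : Matrix n n ℂ}
    (hρ₀ : IsState ρ₀) (hρ₁ : IsState ρ₁) (hσ : σ.PosSemidef) (h : SuppLE ρ₀ σ) {α : ℝ}
    (hα₀ : 0 < α) (hα₂ : α < 2) :
    (1 - traceNorm (ρ₀ - ρ₁) / 2) ^ 2 ≤ petzQuasi (2 - α) ρ₀ σ * petzQuasi α ρ₁ σ := by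
  have audenaert := half_rtr_add_rtr_sub_traceNorm_le hρ₀.1 hρ₁.1 (s := α / 2) (by linarith)
    (by linarith)
  rw [hρ₀.rtr_eq_one, hρ₁.rtr_eq_one] at audenaert
  calc (1 - traceNorm (ρ₀ - ρ₁) / 2) ^ 2
      ≤ rtr (mpow ρ₀ (1 - α / 2) * mpow ρ₁ (α / 2)) ^ 2 := by
        gcongr
        · exact sub_nonneg.mpr (hρ₀.half_traceNorm_sub_le_one hρ₁)
        · linarith
    _ ≤ petzQuasi (2 - α) ρ₀ σ * petzQuasi α ρ₁ σ :=
        sq_rtr_mpow_mul_mpow_le_petzQuasi_mul_petzQuasi hρ₀.1 hρ₁.1 hσ h α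

lemma elog_of_nonpos {x : ℝ} (hx : x ≤ 0) : elog x = ⊥ :=
  if_pos hx

lemma elog_of_pos {x : ℝ} (hx : 0 < x) : elog x = (Real.logb 2 x : ℝ) :=
  if_neg hx.not_ge

lemma elog_ne_top (x : ℝ) : elog x ≠ ⊤ := by
  rcases le_or_gt x 0 with hx | hx
  · simp [elog_of_nonpos hx]
  · simp [elog_of_pos hx]

lemma elog_mono : Monotone elog := by
  intro x y hxy
  rcases le_or_gt x 0 with hx | hx
  · simp [elog_of_nonpos hx]
  · rw [elog_of_pos hx, elog_of_pos (hx.trans_le hxy), EReal.coe_le_coe_iff]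
    exact Real.logb_le_logb_of_le one_lt_two hx hxy

lemma coe_mul_elog_ne_top {c : ℝ} (hc : 0 ≤ c) (x : ℝ) : (c : EReal) * elog x ≠ ⊤ := by
  rw [EReal.mul_ne_top]
  simp [elog_ne_top, hc]

lemma coe_mul_elog_ne_bot {c : ℝ} (hc : c ≤ 0) (x : ℝ) : (c : EReal) * elog x ≠ ⊥ := by
  rw [EReal.mul_ne_bot]
  simp [elog_ne_top, hc]

lemma elog_add_elog_le_of_sq_le_mul {c x y z : ℝ} (hc : 0 < c) (hy : 0 ≤ y)
    (h : x ^ 2 ≤ y * z) :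
    ((2 * c : ℝ) : EReal) * elog x + ((-c : ℝ) : EReal) * elog z ≤ (c : EReal) * elog y := by
  rcases le_or_gt x 0 with hx | hx
  · rw [elog_of_nonpos hx, EReal.coe_mul_bot_of_pos (by positivity), EReal.bot_add]
    exact bot_le
  have hyz : 0 < y * z := (pow_pos hx 2).trans_le h
  have hz : 0 < z := pos_of_mul_pos_right hyz hy
  have hy : 0 < y := pos_of_mul_pos_left hyz hz.le
  have hlog := Real.logb_le_logb_of_le one_lt_two (pow_pos hx 2) h
  rw [Real.logb_pow, Real.logb_mul hy.ne' hz.ne'] at hlog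
  rw [elog_of_pos hx, elog_of_pos hy, elog_of_pos hz]
  norm_cast
  have := mul_le_mul_of_nonneg_left hlog hc.le
  push_cast at this
  linarith

lemma petzRenyi_of_lt_one {α : ℝ} (hα : α < 1) (ρ σ : Matrix n n ℂ) :
    petzRenyi α ρ σ = ((α - 1)⁻¹ : ℝ) * elog (petzQuasi α ρ σ) :=
  if_neg fun h => hα.not_gt h.1

lemma petzRenyi_of_suppLE {ρ σ : Matrix n n ℂ} (h : SuppLE ρ σ) (α : ℝ) :
    petzRenyi α ρ σ = ((α - 1)⁻¹ : ℝ) * elog (petzQuasi α ρ σ) :=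
  if_neg fun h' => h'.2 h

lemma petzRenyi_of_not_suppLE {α : ℝ} (hα : 1 < α) {ρ σ : Matrix n n ℂ} (h : ¬ SuppLE ρ σ) :
    petzRenyi α ρ σ = ⊤ :=
  if_pos ⟨hα, h⟩

lemma petzRenyi_ne_bot_of_lt_one {α : ℝ} (hα : α < 1) (ρ σ : Matrix n n ℂ) :
    petzRenyi α ρ σ ≠ ⊥ := by
  rw [petzRenyi_of_lt_one hα]
  exact coe_mul_elog_ne_bot (inv_nonpos.mpr (by linarith)) _

lemma elog_traceNorm_add_petzRenyi_le {ρ₀ ρ₁ σ : Matrix n n ℂ} (hρ₀ : IsState ρ₀)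
    (hρ₁ : IsState ρ₁) (hσ : σ.PosSemidef) {α : ℝ} (hα₀ : 0 < α) (hα₁ : α < 1) :
    ((2 / (1 - α) : ℝ) : EReal) * elog (1 - traceNorm (ρ₀ - ρ₁) / 2) + petzRenyi α ρ₁ σ ≤
      petzRenyi (2 - α) ρ₀ σ := by
  by_cases h : SuppLE ρ₀ σ
  · rw [petzRenyi_of_lt_one hα₁, petzRenyi_of_suppLE h, div_eq_mul_inv, ← neg_sub 1 α, inv_neg,
      show 2 - α - 1 = 1 - α by ring]
    exact elog_add_elog_le_of_sq_le_mul (inv_pos.mpr (by linarith))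
      (petzQuasi_nonneg hρ₀.1 hσ _)
      (sq_one_sub_half_traceNorm_le_petzQuasi_mul_petzQuasi hρ₀ hρ₁ hσ h hα₀ (by linarith))
  · rw [petzRenyi_of_not_suppLE (by linarith) h]
    exact le_top

lemma petzRenyi_ne_top_of_suppLE {ρ σ : Matrix n n ℂ} (hρ : IsState ρ) (hσ : σ.PosSemidef)
    (h : SuppLE ρ σ) {α : ℝ} (hα₀ : 0 < α) (hα₁ : α < 1) : petzRenyi α ρ σ ≠ ⊤ := by
  have le_dual : petzRenyi α ρ σ ≤ petzRenyi (2 - α) ρ σ := by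
    simpa [traceNorm_zero, elog_of_pos] using elog_traceNorm_add_petzRenyi_le hρ hρ hσ hα₀ hα₁
  refine ne_top_of_le_ne_top ?_ le_dual
  rw [petzRenyi_of_suppLE h]
  exact coe_mul_elog_ne_top (inv_nonneg.mpr (by linarith)) _

theorem petzRenyi_diff_traceDist_bound_general {ρ₀ ρ₁ σ : Matrix n n ℂ} (hρ₀ : IsState ρ₀)
    (hρ₁ : IsState ρ₁) (hσ : σ.PosSemidef) {α : ℝ} (hα : 0 < α ∧ α < 1)
    (hfin : petzRenyi α ρ₁ σ ≠ ⊤) :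
    ((2 / (1 - α) : ℝ) : EReal) * elog (1 - traceNorm (ρ₀ - ρ₁) / 2) ≤
        petzRenyi (2 - α) ρ₀ σ - petzRenyi α ρ₁ σ ∧
    ((2 / (1 - α) : ℝ) : EReal) * elog (1 - sineDist ρ₀ ρ₁) ≤
        ((2 / (1 - α) : ℝ) : EReal) * elog (1 - traceNorm (ρ₀ - ρ₁) / 2) := by
  have hnonneg : (0 : EReal) ≤ ((2 / (1 - α) : ℝ) : EReal) :=
    EReal.coe_nonneg.mpr (div_nonneg zero_le_two (sub_nonneg.mpr hα.2.le))
  constructor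
  · rw [EReal.le_sub_iff_add_le (.inl (petzRenyi_ne_bot_of_lt_one hα.2 ρ₁ σ)) (.inl hfin)]
    exact elog_traceNorm_add_petzRenyi_le hρ₀ hρ₁ hσ hα.1 hα.2
  · exact mul_le_mul_of_nonneg_left
      (elog_mono (sub_le_sub_left (hρ₀.half_traceNorm_sub_le_sineDist hρ₁) 1)) hnonneg

end

/-- Rényi-divergence difference bounded by trace distance. -/
theorem petzRenyi_diff_traceDist_bound {d : ℕ} (ρ₀ ρ₁ σ : Matrix (Fin d) (Fin d) ℂ)
    (hρ₀ : IsState ρ₀) (hρ₁ : IsState ρ₁) (hσ : IsState σ) (hsupp : SuppLE ρ₁ σ)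
    (α : ℝ) (hα : 0 < α ∧ α < 1) :
    ((2 / (1 - α) : ℝ) : EReal) * elog (1 - traceNorm (ρ₀ - ρ₁) / 2) ≤
        petzRenyi (2 - α) ρ₀ σ - petzRenyi α ρ₁ σ ∧
    ((2 / (1 - α) : ℝ) : EReal) * elog (1 - sineDist ρ₀ ρ₁) ≤
        ((2 / (1 - α) : ℝ) : EReal) * elog (1 - traceNorm (ρ₀ - ρ₁) / 2) :=
  petzRenyi_diff_traceDist_bound_general hρ₀ hρ₁ hσ.1 hα
    (petzRenyi_ne_top_of_suppLE hρ₁ hσ.1 hsupp hα.1 hα.2)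

end QCD
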